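/- Under Assumptions 1.1, 1.2 and 1.3, there exist random variables Ĉ₂, Ĉ₅ with 1 ≤ Ĉ₂, Ĉ₅ < ∞ everywhere such that, almost surely on Λ, for every real ε > 0 the following hold for all but finitely many n: (1) u(θ_n) ≥ −Ĉ₂ γ_n^{−p̂} (φ_ε(ξ))^{μ̂}; (2) ‖∇f(θ_n)‖² ≤ Ĉ₅ (max{u(θ_n), 0} + γ_n^{−p̂} (φ_ε(ξ))^{μ̂}). -/

import Mathlib

open MeasureTheory Filter

/-! Over a block of steps of total length `t`, with `t` small compared with the inverse of the
Lipschitz constant of `∇f`, the recursion is a perturbed gradient step: it lowers `f` by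
`t/4 * (‖∇f‖² - v²)`, where `v` is `8/t` times the accumulated noise. By summation by parts the
noise accumulated from index `n` on is at most `γ_n^{-r}` times the weighted noise of the
assumption, hence eventually at most `γ_n^{-min(r, r̂)} φ_ε(ξ)`, which decreases to zero. If
`f(θ_n) - f̂ < -M v_n^μ̂`, the Łojasiewicz inequality gives `‖∇f(θ_n)‖ > v_n`, hence the next
block lowers `f` further; iterating, `f(θ_k)` stays below a level smaller than `f̂` infinitely
often, against the definition of `f̂`. The gradient bound then follows by reading the block
estimate backwards and using the lower bound at the end of the block. -/

section PartialSums

variable {E : Type*} [NormedAddCommGroup E]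

lemma norm_sum_Ico_smul_le_of_antitoneOn [NormedSpace ℝ E] {b : ℕ → E} {c : ℕ → ℝ} {n k : ℕ}
    {B : ℝ} (hnk : n ≤ k) (hc₀ : ∀ i ≥ n, 0 ≤ c i) (hc : AntitoneOn c (Set.Ici n))
    (hB : ∀ j ∈ Finset.Icc n k, ‖∑ i ∈ Finset.Ico n j, b i‖ ≤ B) :
    ‖∑ i ∈ Finset.Ico n k, c i • b i‖ ≤ c n * B := by
  set S : ℕ → E := fun j => ∑ i ∈ Finset.Ico n j, b i with hS
  have abel_remainder : ∀ j ≥ n, j ≤ k →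
      ‖∑ i ∈ Finset.Ico n j, c i • b i - c j • S j‖ ≤ (c n - c j) * B := by
    intro j hj
    induction j, hj using Nat.le_induction with
    | base => simp [hS]
    | succ j hj ih =>
      intro hjk
      have hdrop : 0 ≤ c j - c (j + 1) :=
        sub_nonneg.2 (hc hj (Set.mem_Ici.2 (by omega)) j.le_succ)
      have hsplit : ∑ i ∈ Finset.Ico n (j + 1), c i • b i - c (j + 1) • S (j + 1) =
          (∑ i ∈ Finset.Ico n j, c i • b i - c j • S j) + (c j - c (j + 1)) • S (j + 1) := by
        simp only [hS, Finset.sum_Ico_succ_top hj]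
        module
      calc _ ≤ (c n - c j) * B + (c j - c (j + 1)) * B := by
            rw [hsplit]
            refine norm_add_le_of_le (ih (by omega)) ?_
            rw [norm_smul, Real.norm_of_nonneg hdrop]
            exact mul_le_mul_of_nonneg_left (hB _ (Finset.mem_Icc.2 ⟨by omega, hjk⟩)) hdrop
        _ = (c n - c (j + 1)) * B := by ring
  calc ‖∑ i ∈ Finset.Ico n k, c i • b i‖
      = ‖(∑ i ∈ Finset.Ico n k, c i • b i - c k • S k) + c k • S k‖ := by rw [sub_add_cancel]
    _ ≤ (c n - c k) * B + c k * B := by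
        refine norm_add_le_of_le (abel_remainder k hnk le_rfl) ?_
        rw [norm_smul, Real.norm_of_nonneg (hc₀ k hnk)]
        exact mul_le_mul_of_nonneg_left (hB k (Finset.mem_Icc.2 ⟨hnk, le_rfl⟩)) (hc₀ k hnk)
    _ = c n * B := by ring

lemma norm_sum_Ico_le_inv_mul_of_monotoneOn [NormedSpace ℝ E] {b : ℕ → E} {β : ℕ → ℝ} {n k : ℕ}
    {B : ℝ} (hnk : n ≤ k) (hβ₀ : ∀ i ≥ n, 0 < β i) (hβ : MonotoneOn β (Set.Ici n))
    (hB : ∀ j ∈ Finset.Icc n k, ‖∑ i ∈ Finset.Ico n j, β i • b i‖ ≤ B) :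
    ‖∑ i ∈ Finset.Ico n k, b i‖ ≤ (β n)⁻¹ * B := by
  have hcancel : ∑ i ∈ Finset.Ico n k, b i = ∑ i ∈ Finset.Ico n k, (β i)⁻¹ • β i • b i :=
    Finset.sum_congr rfl fun i hi =>
      (inv_smul_smul₀ (hβ₀ i (Finset.mem_Ico.1 hi).1).ne' (b i)).symm
  rw [hcancel]
  exact norm_sum_Ico_smul_le_of_antitoneOn hnk (fun i hi => (inv_pos.2 (hβ₀ i hi)).le)
    (fun i hi j hj hij => inv_anti₀ (hβ₀ i hi) (hβ hi hj hij)) hB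

lemma norm_sum_Ico_le_biSup_norm_sum_Icc (b : ℕ → E) {n j N : ℕ} (hnj : n ≤ j) (hjN : j ≤ N) :
    ‖∑ i ∈ Finset.Ico n j, b i‖ ≤ ⨆ k ∈ Set.Ico n N, ‖∑ i ∈ Finset.Icc n k, b i‖ := by
  obtain rfl | hlt := hnj.eq_or_lt
  · simpa using Real.iSup_nonneg fun k => Real.iSup_nonneg fun _ => norm_nonneg _
  obtain ⟨k, rfl⟩ : ∃ k, j = k + 1 := ⟨j - 1, by omega⟩
  rw [Finset.Ico_add_one_right_eq_Icc]
  have hbdd : BddAbove (⋃ k, Set.range fun _ : k ∈ Set.Ico n N => ‖∑ i ∈ Finset.Icc n k, b i‖) :=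
    (((Set.finite_Ico n N).image fun k => ‖∑ i ∈ Finset.Icc n k, b i‖).subset (by
      simp only [Set.iUnion_subset_iff, Set.range_subset_iff]
      exact fun k hk => ⟨k, hk, rfl⟩)).bddAbove
  exact le_ciSup₂ hbdd k (Set.mem_Ico.2 ⟨by omega, by omega⟩)

lemma le_sSup_of_sub_le {γ : ℕ → ℝ} (hγ : Tendsto γ atTop atTop) {n k : ℕ} {t : ℝ} (hnk : n ≤ k)
    (hk : γ k - γ n ≤ t) : k ≤ sSup {k | n ≤ k ∧ γ k - γ n ≤ t} := by
  obtain ⟨N, hN⟩ := eventually_atTop.1 (hγ.eventually_gt_atTop (γ n + t))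
  refine le_csSup ⟨N, fun j hj => ?_⟩ ⟨hnk, hk⟩
  by_contra! hlt
  linarith [hN j hlt.le, hj.2]

lemma exists_gt_sum_Ico_mem_Icc {α : ℕ → ℝ}
    (hα : Tendsto (fun n => ∑ i ∈ Finset.range n, α i) atTop atTop) {n : ℕ} {a b : ℝ}
    (ha : 0 < a) (hle : ∀ i ≥ n, α i ≤ b - a) :
    ∃ k > n, ∑ i ∈ Finset.Ico n k, α i ∈ Set.Icc a b := by
  classical
  have hreach : ∃ k, n ≤ k ∧ a ≤ ∑ i ∈ Finset.Ico n k, α i := by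
    obtain ⟨k, hk, hnk⟩ := ((hα.eventually_ge_atTop
      (∑ i ∈ Finset.range n, α i + a)).and (eventually_ge_atTop n)).exists
    exact ⟨k, hnk, by rw [Finset.sum_Ico_eq_sub _ hnk]; linarith⟩
  obtain ⟨hnk, hak⟩ := Nat.find_spec hreach
  obtain h | ⟨j, hj⟩ : Nat.find hreach = n ∨ ∃ j ≥ n, Nat.find hreach = j + 1 := by
    rcases hnk.eq_or_lt with h | h
    · exact Or.inl h.symm
    · exact Or.inr ⟨Nat.find hreach - 1, by omega, by omega⟩
  · rw [h, Finset.Ico_self, Finset.sum_empty] at hak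
    exact absurd hak ha.not_ge
  · have hbefore : ∑ i ∈ Finset.Ico n j, α i < a := by
      simpa [hj.1] using Nat.find_min hreach (m := j) (by omega)
    refine ⟨_, by omega, hak, ?_⟩
    rw [hj.2, Finset.sum_Ico_succ_top hj.1]
    linarith [hle j hj.1]

end PartialSums

section PerturbedGradientDescent

open scoped Gradient NNReal RealInnerProductSpace

variable {E : Type*} [NormedAddCommGroup E]

section Displacement

variable [NormedSpace ℝ E] {g : E → E} {s : Set E} {K : ℝ≥0} {α : ℕ → ℝ} {x ξ : ℕ → E}
  {n k : ℕ} {t w : ℝ}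

lemma sub_add_sum_smul_eq_neg_sum (hrec : ∀ n, x (n + 1) = x n - α n • (g (x n) + ξ n))
    (hnk : n ≤ k) :
    x k - x n + (∑ i ∈ Finset.Ico n k, α i) • g (x n) =
      -(∑ i ∈ Finset.Ico n k, α i • (g (x i) - g (x n)) + ∑ i ∈ Finset.Ico n k, α i • ξ i) := by
  rw [← Finset.sum_Ico_sub x hnk, Finset.sum_smul, ← Finset.sum_add_distrib,
    ← Finset.sum_add_distrib, ← Finset.sum_neg_distrib]
  refine Finset.sum_congr rfl fun i _ => ?_
  rw [hrec]
  module

lemma norm_sub_add_sum_smul_le (hrec : ∀ n, x (n + 1) = x n - α n • (g (x n) + ξ n))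
    (hg : LipschitzOnWith K g s) (hx : ∀ n, x n ∈ s) (hα : ∀ n, 0 ≤ α n) (hnk : n ≤ k)
    (ht : ∑ i ∈ Finset.Ico n k, α i ≤ t) {m : ℝ} (hm₀ : 0 ≤ m)
    (hm : ∀ i ∈ Finset.Ico n k, ‖x i - x n‖ ≤ m)
    (hw : ‖∑ i ∈ Finset.Ico n k, α i • ξ i‖ ≤ w) :
    ‖x k - x n + (∑ i ∈ Finset.Ico n k, α i) • g (x n)‖ ≤ t * (K * m) + w := by
  rw [sub_add_sum_smul_eq_neg_sum hrec hnk, norm_neg]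
  refine norm_add_le_of_le ?_ hw
  calc ‖∑ i ∈ Finset.Ico n k, α i • (g (x i) - g (x n))‖
      ≤ ∑ i ∈ Finset.Ico n k, α i * (K * m) := by
        refine norm_sum_le_of_le _ fun i hi => ?_
        rw [norm_smul, Real.norm_of_nonneg (hα i)]
        exact mul_le_mul_of_nonneg_left ((hg.norm_sub_le (hx i) (hx n)).trans
          (mul_le_mul_of_nonneg_left (hm i hi) K.coe_nonneg)) (hα i)
    _ = (∑ i ∈ Finset.Ico n k, α i) * (K * m) := (Finset.sum_mul ..).symm
    _ ≤ t * (K * m) := by gcongr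

lemma norm_sub_le_of_mem_Icc (hrec : ∀ n, x (n + 1) = x n - α n • (g (x n) + ξ n))
    (hg : LipschitzOnWith K g s) (hx : ∀ n, x n ∈ s) (hα : ∀ n, 0 ≤ α n)
    (ht : ∑ i ∈ Finset.Ico n k, α i ≤ t) (hKt : 2 * (K * t) ≤ 1)
    (hw : ∀ j ∈ Finset.Icc n k, ‖∑ i ∈ Finset.Ico n j, α i • ξ i‖ ≤ w)
    {j : ℕ} (hj : j ∈ Finset.Icc n k) : ‖x j - x n‖ ≤ 2 * (t * ‖g (x n)‖ + w) := by
  have ht₀ : 0 ≤ t := (Finset.sum_nonneg fun i _ => hα i).trans ht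
  have hw₀ : 0 ≤ w := (norm_nonneg _).trans (hw j hj)
  set m := 2 * (t * ‖g (x n)‖ + w)
  have hm₀ : 0 ≤ m := by positivity
  induction j using Nat.strong_induction_on with
  | h j ih =>
    obtain ⟨hnj, hjk⟩ := Finset.mem_Icc.1 hj
    set T := ∑ i ∈ Finset.Ico n j, α i
    have hT₀ : 0 ≤ T := Finset.sum_nonneg fun i _ => hα i
    have hTt : T ≤ t := (Finset.sum_le_sum_of_subset_of_nonneg
      (Finset.Ico_subset_Ico_right hjk) fun i _ _ => hα i).trans ht
    have hprev : ∀ i ∈ Finset.Ico n j, ‖x i - x n‖ ≤ m := fun i hi => by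
      obtain ⟨hni, hij⟩ := Finset.mem_Ico.1 hi
      exact ih i hij (Finset.mem_Icc.2 ⟨hni, hij.le.trans hjk⟩)
    have hdrift := norm_sub_add_sum_smul_le hrec hg hx hα hnj hTt hm₀ hprev (hw j hj)
    calc ‖x j - x n‖ = ‖(x j - x n + T • g (x n)) - T • g (x n)‖ := by rw [add_sub_cancel_right]
      _ ≤ (t * (K * m) + w) + t * ‖g (x n)‖ := by
          refine norm_sub_le_of_le hdrift ?_
          rw [norm_smul, Real.norm_of_nonneg hT₀]
          gcongr
      _ ≤ m := by linarith [mul_le_mul_of_nonneg_right hKt hm₀]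

end Displacement

variable [InnerProductSpace ℝ E] [CompleteSpace E] {f : E → ℝ} {s : Set E} {K : ℝ≥0}

lemma sub_le_inner_gradient_add_of_lipschitzOnWith (hs : Convex ℝ s)
    (hf : ∀ z ∈ s, DifferentiableAt ℝ f z) (hK : LipschitzOnWith K (∇ f) s) {x y : E}
    (hx : x ∈ s) (hy : y ∈ s) : f y - f x ≤ ⟪∇ f x, y - x⟫ + K * ‖y - x‖ ^ 2 := by
  have hseg : segment ℝ x y ⊆ s := hs.segment_subset hx hy
  have hfderiv : ∀ z ∈ segment ℝ x y, ‖fderiv ℝ f z - fderiv ℝ f x‖ ≤ K * ‖y - x‖ := by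
    intro z hz
    rw [← toDual_gradient, ← toDual_gradient, ← map_sub, LinearIsometryEquiv.norm_map]
    exact (hK.norm_sub_le (hseg hz) hx).trans
      (mul_le_mul_of_nonneg_left (norm_sub_le_of_mem_segment hz) K.coe_nonneg)
  have hmean := (convex_segment x y).norm_image_sub_le_of_norm_fderiv_le'
    (fun z hz => hf z (hseg hz)) hfderiv (left_mem_segment ℝ x y) (right_mem_segment ℝ x y)
  rw [← inner_gradient_left, Real.norm_eq_abs] at hmean
  linarith [le_abs_self (f y - f x - ⟪∇ f x, y - x⟫)]

lemma sub_le_of_perturbed_gradient_descent (hs : Convex ℝ s)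
    (hf : ∀ z ∈ s, DifferentiableAt ℝ f z) (hK : LipschitzOnWith K (∇ f) s)
    {α : ℕ → ℝ} {x ξ : ℕ → E} (hrec : ∀ n, x (n + 1) = x n - α n • (∇ f (x n) + ξ n))
    (hx : ∀ n, x n ∈ s) (hα : ∀ n, 0 ≤ α n) {n k : ℕ} (hnk : n ≤ k) {t v : ℝ} (ht₀ : 0 < t)
    (hKt : 32 * (K * t) ≤ 1) (ht : ∑ i ∈ Finset.Ico n k, α i ∈ Set.Icc (t / 2) t)
    (hv : ∀ j ∈ Finset.Icc n k, ‖∑ i ∈ Finset.Ico n j, α i • ξ i‖ ≤ t / 8 * v) :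
    f (x k) - f (x n) ≤ -(t / 4 * (‖∇ f (x n)‖ ^ 2 - v ^ 2)) := by
  set G := ‖∇ f (x n)‖
  set T := ∑ i ∈ Finset.Ico n k, α i
  set m := 2 * (t * G + t / 8 * v) with hm
  set e := x k - x n + T • ∇ f (x n) with he
  have hk : k ∈ Finset.Icc n k := Finset.mem_Icc.2 ⟨hnk, le_rfl⟩
  have hv₀ : 0 ≤ v := nonneg_of_mul_nonneg_right ((norm_nonneg _).trans (hv k hk)) (by positivity)
  have hm₀ : 0 ≤ m := by positivity
  have hdisp : ∀ j ∈ Finset.Icc n k, ‖x j - x n‖ ≤ m := fun j hj =>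
    norm_sub_le_of_mem_Icc hrec hK hx hα ht.2 (by linarith) hv hj
  have herr : ‖e‖ ≤ m / 32 + t / 8 * v :=
    (norm_sub_add_sum_smul_le hrec hK hx hα hnk ht.2 hm₀
      (fun j hj => hdisp j (Finset.Ico_subset_Icc_self hj)) (hv k hk)).trans
      (by linarith [mul_le_mul_of_nonneg_right hKt hm₀])
  have hinner : ⟪∇ f (x n), x k - x n⟫ ≤ -(t / 2) * G ^ 2 + G * (m / 32 + t / 8 * v) := by
    have hsplit : x k - x n = e - T • ∇ f (x n) := by rw [he, add_sub_cancel_right]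
    rw [hsplit, inner_sub_right, inner_smul_right, real_inner_self_eq_norm_sq]
    have hcs : ⟪∇ f (x n), e⟫ ≤ G * (m / 32 + t / 8 * v) :=
      (real_inner_le_norm _ _).trans (by gcongr)
    linarith [mul_le_mul_of_nonneg_right ht.1 (sq_nonneg G)]
  have hquad : K * ‖x k - x n‖ ^ 2 ≤ t / 8 * (G + v / 8) ^ 2 :=
    calc K * ‖x k - x n‖ ^ 2 ≤ K * m ^ 2 := by
          gcongr; exact hdisp k hk
      _ = K * t * (4 * t * (G + v / 8) ^ 2) := by rw [hm]; ring
      _ ≤ 1 / 32 * (4 * t * (G + v / 8) ^ 2) := by gcongr; linarith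
      _ = t / 8 * (G + v / 8) ^ 2 := by ring
  calc f (x k) - f (x n)
      ≤ -(t / 2) * G ^ 2 + G * (m / 32 + t / 8 * v) + t / 8 * (G + v / 8) ^ 2 :=
        (sub_le_inner_gradient_add_of_lipschitzOnWith hs hf hK (hx n) (hx k)).trans
          (add_le_add hinner hquad)
    _ = -(t / 4 * (G ^ 2 - v ^ 2)) - t / 16 * (G - 21 / 16 * v) ^ 2 - 575 / 4096 * t * v ^ 2 := by
        rw [hm]; ring
    _ ≤ -(t / 4 * (G ^ 2 - v ^ 2)) := by
        have hsq : 0 ≤ t / 16 * (G - 21 / 16 * v) ^ 2 := by positivity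
        have hvsq : 0 ≤ 575 / 4096 * t * v ^ 2 := by positivity
        linarith

end PerturbedGradientDescent

section DescentSequences

lemma frequently_atTop_of_forall_exists_gt {p : ℕ → Prop} {n : ℕ} (hn : p n)
    (h : ∀ m, p m → ∃ k > m, p k) : ∃ᶠ k in atTop, p k := by
  refine Nat.frequently_atTop_iff_infinite.2 fun hfin => ?_
  obtain ⟨m, hm, hmax⟩ := hfin.exists_maximal ⟨n, hn⟩
  obtain ⟨k, hmk, hk⟩ := h m hm
  exact hmk.not_ge (hmax hk hmk.le)

variable {u G v : ℕ → ℝ} {A M μ : ℝ}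

lemma eventually_neg_rpow_le_of_descent (hA : 0 ≤ A) (hM : 0 ≤ M) (hμ : 0 < μ)
    (hG : ∀ n, 0 ≤ G n) (hv : ∀ᶠ n in atTop, 0 ≤ v n) (hanti : ∀ᶠ n in atTop, ∀ k ≥ n, v k ≤ v n)
    (hstep : ∀ᶠ n in atTop, ∃ k > n, u k - u n ≤ -(A * (G n ^ 2 - v n ^ 2)))
    (hLoj : ∀ᶠ n in atTop, u n < 0 → |u n| ≤ M * G n ^ μ)
    (hinf : ∀ c < 0, ∀ᶠ n in atTop, c < u n) :
    ∀ᶠ n in atTop, -(M * v n ^ μ) ≤ u n := by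
  filter_upwards [eventually_forall_ge_atTop.2 hv, hanti, eventually_forall_ge_atTop.2 hstep,
    eventually_forall_ge_atTop.2 hLoj] with n hv hanti hstep hLoj
  by_contra! hlow
  have hun : u n < 0 := hlow.trans_le
    (neg_nonpos.2 (mul_nonneg hM (Real.rpow_nonneg (hv n le_rfl) μ)))
  have hdescend : ∀ m, n ≤ m ∧ u m ≤ u n → ∃ k > m, n ≤ k ∧ u k ≤ u n := by
    rintro m ⟨hnm, hum⟩
    obtain ⟨k, hmk, hk⟩ := hstep m hnm
    have hvG : M * v m ^ μ < M * G m ^ μ :=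
      calc M * v m ^ μ ≤ M * v n ^ μ := by
            gcongr
            exacts [hv m hnm, hanti m hnm]
        _ < -u m := by linarith
        _ ≤ M * G m ^ μ := (neg_le_abs _).trans (hLoj m hnm (hum.trans_lt hun))
    have hlt : v m < G m :=
      (Real.rpow_lt_rpow_iff (hv m hnm) (hG m) hμ).1 (lt_of_mul_lt_mul_left hvG hM)
    have hsq : 0 ≤ A * (G m ^ 2 - v m ^ 2) :=
      mul_nonneg hA (sub_nonneg.2 (pow_le_pow_left₀ (hv m hnm) hlt.le 2))
    exact ⟨k, hmk, by omega, by linarith⟩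
  obtain ⟨k, ⟨-, hk⟩, hk'⟩ := ((frequently_atTop_of_forall_exists_gt
    (⟨le_rfl, le_rfl⟩ : n ≤ n ∧ u n ≤ u n) hdescend).and_eventually (hinf _ hun)).exists
  exact hk'.not_ge hk

lemma eventually_sq_le_of_descent (hA : 0 ≤ A) (hM : 0 ≤ M) (hμ : μ ∈ Set.Ioc 0 2)
    (hv : ∀ᶠ n in atTop, 0 < v n) (hanti : ∀ᶠ n in atTop, ∀ k ≥ n, v k ≤ v n)
    (hv₁ : ∀ᶠ n in atTop, v n ≤ 1)
    (hstep : ∀ᶠ n in atTop, ∃ k > n, u k - u n ≤ -(A * (G n ^ 2 - v n ^ 2)))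
    (hlow : ∀ᶠ n in atTop, -(M * v n ^ μ) ≤ u n) :
    ∀ᶠ n in atTop, A * G n ^ 2 ≤ max (u n) 0 + (M + A) * v n ^ μ := by
  filter_upwards [eventually_forall_ge_atTop.2 hv, hanti, hv₁, hstep,
    eventually_forall_ge_atTop.2 hlow] with n hv hanti hv₁ ⟨k, hnk, hk⟩ hlow
  have hmono : M * v k ^ μ ≤ M * v n ^ μ :=
    mul_le_mul_of_nonneg_left
      (Real.rpow_le_rpow (hv k hnk.le).le (hanti k hnk.le) hμ.1.le) hM
  have hsq : A * v n ^ 2 ≤ A * v n ^ μ := by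
    rw [← Real.rpow_two]
    exact mul_le_mul_of_nonneg_left
      (Real.rpow_le_rpow_of_exponent_ge (hv n le_rfl) hv₁ hμ.2) hA
  linarith [hlow k hnk.le, le_max_left (u n) 0]

end DescentSequences

section ClusterNeighborhood

lemma exists_mapClusterPt_eq_of_mapClusterPt_comp {ι X Y : Type*} [TopologicalSpace X]
    [TopologicalSpace Y] [T2Space Y] {l : Filter ι} {s : Set X} (hs : IsCompact s) {f : X → Y}
    (hf : Continuous f) {x : ι → X} (hx : ∀ᶠ i in l, x i ∈ s) {y : Y}
    (hy : MapClusterPt y l (f ∘ x)) : ∃ z, MapClusterPt z l x ∧ f z = y := by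
  obtain ⟨U, hUl, hUy⟩ := mapClusterPt_iff_ultrafilter.1 hy
  obtain ⟨z, -, hz⟩ := hs.ultrafilter_le_nhds (U.map x) (le_principal_iff.2 (hUl hx))
  exact ⟨z, mapClusterPt_iff_ultrafilter.2 ⟨U, hUl, hz⟩,
    tendsto_nhds_unique ((hf.tendsto z).comp hz) hUy⟩

/-- The set `Q̂` of the paper: the closure of the union of the closed balls of radius `δ z / 2`
around the accumulation points `z` of the sequence `x`. -/
def clusterNeighborhood {X : Type*} [PseudoMetricSpace X] (δ : X → ℝ) (x : ℕ → X) : Set X :=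
  closure (⋃ z ∈ {z | MapClusterPt z atTop x}, Metric.closedBall z (δ z / 2))

variable {X : Type*} [PseudoMetricSpace X] {δ : X → ℝ} {x : ℕ → X}

lemma mem_clusterNeighborhood_of_mapClusterPt (hδ : ∀ z, 0 < δ z) {z : X}
    (hz : MapClusterPt z atTop x) : z ∈ clusterNeighborhood δ x :=
  subset_closure (Set.mem_biUnion hz (Metric.mem_closedBall_self (half_pos (hδ z)).le))

lemma isCompact_clusterNeighborhood [ProperSpace X] {C : ℝ} (hδ : ∀ z, δ z ≤ C)
    (hx : Bornology.IsBounded (Set.range x)) : IsCompact (clusterNeighborhood δ x) := by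
  refine Metric.isCompact_of_isClosed_isBounded isClosed_closure
    ((hx.closure.cthickening (δ := C / 2)).subset
      (closure_minimal (Set.iUnion₂_subset fun z hz => ?_) Metric.isClosed_cthickening))
  have hz : z ∈ closure (Set.range x) :=
    (hz.clusterPt.mono (le_principal_iff.2 range_mem_map)).mem_closure
  exact (Metric.closedBall_subset_closedBall (by linarith [hδ z])).trans
    (Metric.closedBall_subset_cthickening hz _)

lemma eventually_mem_clusterNeighborhood {s : Set X} (hs : IsCompact s)
    (hx : ∀ᶠ n in atTop, x n ∈ s) (hδ : ∀ z, 0 < δ z) :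
    ∀ᶠ n in atTop, x n ∈ clusterNeighborhood δ x := by
  set U := ⋃ z ∈ {z | MapClusterPt z atTop x}, Metric.ball z (δ z / 2)
  have hsub : U ⊆ clusterNeighborhood δ x :=
    (Set.iUnion₂_mono fun z _ => Metric.ball_subset_closedBall).trans subset_closure
  have hU : ∀ᶠ n in atTop, x n ∈ U := hs.adherence_nhdset (f := map x atTop)
    (le_principal_iff.2 hx) (isOpen_biUnion fun _ _ => Metric.isOpen_ball) fun z _ hz =>
      Set.mem_biUnion (s := {z | MapClusterPt z atTop x}) hz
        (Metric.mem_ball_self (half_pos (hδ z)))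
  exact hU.mono fun n hn => hsub hn

lemma isBounded_range_comp_of_continuous [ProperSpace X] {Y : Type*} [PseudoMetricSpace Y]
    {f : X → Y} (hf : Continuous f) (hx : Bornology.IsBounded (Set.range x)) :
    Bornology.IsBounded (Set.range fun n => f (x n)) :=
  (hx.isCompact_closure.image hf).isBounded.subset
    (Set.range_subset_iff.2 fun n => Set.mem_image_of_mem f (subset_closure ⟨n, rfl⟩))

variable [ProperSpace X] {f : X → ℝ}

lemma liminf_mem_image_clusterNeighborhood (hδ : ∀ z, 0 < δ z)
    (hx : Bornology.IsBounded (Set.range x)) (hf : Continuous f) :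
    liminf (fun n => f (x n)) atTop ∈ f '' clusterNeighborhood δ x := by
  have hfx := isBounded_range_comp_of_continuous hf hx
  obtain ⟨z, hz, hfz⟩ := exists_mapClusterPt_eq_of_mapClusterPt_comp (x := x) (l := atTop)
    hx.isCompact_closure hf (.of_forall fun n => subset_closure ⟨n, rfl⟩)
    (MapClusterPt.liminf hfx.bddAbove.isBoundedUnder_of_range.isCoboundedUnder_ge
      hfx.bddBelow.isBoundedUnder_of_range)
  exact ⟨z, mem_clusterNeighborhood_of_mapClusterPt hδ hz, hfz⟩

lemma eventually_lt_of_lt_liminf_of_isBounded_range (hf : Continuous f)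
    (hx : Bornology.IsBounded (Set.range x)) {c : ℝ}
    (hc : c < liminf (fun n => f (x n)) atTop) : ∀ᶠ n in atTop, c < f (x n) :=
  eventually_lt_of_lt_liminf hc
    (isBounded_range_comp_of_continuous hf hx).bddBelow.isBoundedUnder_of_range

lemma eventually_of_lt_liminf_of_forall_mem_clusterNeighborhood (hδ : ∀ z, 0 < δ z)
    (hx : Bornology.IsBounded (Set.range x)) (hf : Continuous f) {p : X → Prop} {ε b : ℝ}
    (hε : 0 < ε) (hb : b = liminf (fun n => f (x n)) atTop)
    (hp : ∀ y ∈ clusterNeighborhood δ x, |f y - b| ≤ ε → p y) :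
    ∀ᶠ n in atTop, f (x n) < b → p (x n) := by
  filter_upwards [eventually_mem_clusterNeighborhood hx.isCompact_closure
      (.of_forall fun n => subset_closure ⟨n, rfl⟩) hδ,
    eventually_lt_of_lt_liminf_of_isBounded_range hf hx (hb ▸ sub_lt_self b hε)]
    with n hn hlow hlt
  exact hp _ hn (abs_le.2 ⟨by linarith, by linarith⟩)

end ClusterNeighborhood

section Rates

/-- The rate `min {r, r̂}` of the paper, where `r̂ = 1 / (2 - μ)` if `μ < 2` and `r̂ = ∞` otherwise;
the exponent `p̂` is `μ * minRate r μ`. -/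
noncomputable def minRate (r μ : ℝ) : ℝ :=
  if μ < 2 then min r (1 / (2 - μ)) else r

/-- The function `φ` of the paper, applied to the limiting noise size `Ξ`. -/
noncomputable def noiseLevel (r μ Ξ : ℝ) : ℝ :=
  if μ = 2 ∨ r < 1 / (2 - μ) then Ξ else if r = 1 / (2 - μ) then 1 + Ξ else 1

variable {r μ Ξ : ℝ}

lemma minRate_pos (hr : 0 < r) : 0 < minRate r μ := by
  unfold minRate
  split_ifs with hμ
  · exact lt_min hr (one_div_pos.2 (sub_pos.2 hμ))
  · exact hr

lemma minRate_eq_and_le_noiseLevel_or (hμ : μ ≤ 2) :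
    (minRate r μ = r ∧ Ξ ≤ noiseLevel r μ Ξ) ∨ (minRate r μ < r ∧ noiseLevel r μ Ξ = 1) := by
  unfold minRate noiseLevel
  generalize 1 / (2 - μ) = q
  obtain rfl | hμ := hμ.eq_or_lt
  · simp
  · rcases lt_trichotomy r q with h | h | h
    · simp [hμ, h, h.le]
    · simp [hμ, hμ.ne, ← h]
    · simp [hμ, hμ.ne, h.le, h.not_gt, h.ne', h]

lemma noiseLevel_nonneg (hμ : μ ≤ 2) (hΞ : 0 ≤ Ξ) : 0 ≤ noiseLevel r μ Ξ := by
  rcases minRate_eq_and_le_noiseLevel_or (r := r) (Ξ := Ξ) hμ with ⟨-, h⟩ | ⟨-, h⟩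
  · exact hΞ.trans h
  · exact h ▸ zero_le_one

lemma eventually_rpow_neg_mul_le_noiseLevel {ι : Type*} {l : Filter ι} {γ η : ι → ℝ}
    (hγ : Tendsto γ l atTop) (hμ : μ ≤ 2) (hη : IsBoundedUnder (· ≤ ·) l η) {ε : ℝ} (hε : 0 < ε) :
    ∀ᶠ n in l,
      γ n ^ (-r) * η n ≤ γ n ^ (-minRate r μ) * (noiseLevel r μ (limsup η l) + ε) := by
  have hηlt : ∀ᶠ n in l, η n < limsup η l + ε :=
    eventually_lt_of_limsup_lt (lt_add_of_pos_right _ hε) hη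
  rcases minRate_eq_and_le_noiseLevel_or (r := r) (Ξ := limsup η l) hμ
    with ⟨hrate, hlevel⟩ | ⟨hrate, hlevel⟩
  · filter_upwards [hηlt, hγ.eventually_ge_atTop 0] with n hn hγn
    rw [hrate]
    gcongr
    linarith
  · have hgap : Tendsto (fun n => γ n ^ (-(r - minRate r μ)) * (limsup η l + ε)) l (nhds 0) := by
      simpa using ((tendsto_rpow_neg_atTop (sub_pos.2 hrate)).comp hγ).mul_const (limsup η l + ε)
    filter_upwards [hηlt, hγ.eventually_gt_atTop 0, hgap.eventually_le_const one_pos]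
      with n hn hγn hgap
    have hsplit : γ n ^ (-r) = γ n ^ (-minRate r μ) * γ n ^ (-(r - minRate r μ)) := by
      rw [← Real.rpow_add hγn]
      ring_nf
    rw [hsplit, hlevel, mul_assoc]
    gcongr
    calc γ n ^ (-(r - minRate r μ)) * η n
        ≤ γ n ^ (-(r - minRate r μ)) * (limsup η l + ε) := by gcongr
      _ ≤ 1 + ε := by linarith

end Rates

section EventualBounds

open scoped Gradient NNReal

lemma sub_eq_sum_Ico_of_eq_sum_range {α γ : ℕ → ℝ} (hγ : ∀ n, γ n = ∑ i ∈ Finset.range n, α i)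
    {n k : ℕ} (hnk : n ≤ k) : γ k - γ n = ∑ i ∈ Finset.Ico n k, α i := by
  rw [hγ, hγ, Finset.sum_Ico_eq_sub _ hnk]

lemma monotone_of_eq_sum_range {α γ : ℕ → ℝ} (hα : ∀ n, 0 ≤ α n)
    (hγ : ∀ n, γ n = ∑ i ∈ Finset.range n, α i) : Monotone γ :=
  monotone_nat_of_le_succ fun n => by
    rw [hγ, hγ, Finset.sum_range_succ]
    exact le_add_of_nonneg_right (hα n)

lemma norm_sum_Ico_le_rpow_neg_mul_biSup {E : Type*} [NormedAddCommGroup E] [NormedSpace ℝ E]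
    {α γ : ℕ → ℝ} (hγ : Monotone γ) (hγtop : Tendsto γ atTop atTop) {r t : ℝ} (hr : 0 ≤ r)
    (ξ : ℕ → E) {n k : ℕ} (hγn : 0 < γ n) (hnk : n ≤ k) (ht : γ k - γ n ≤ t) :
    ‖∑ i ∈ Finset.Ico n k, α i • ξ i‖ ≤
      γ n ^ (-r) * ⨆ k ∈ Set.Ico n (sSup {k | n ≤ k ∧ γ k - γ n ≤ t}),
        ‖∑ i ∈ Finset.Icc n k, (α i * γ i ^ r) • ξ i‖ := by
  rw [Real.rpow_neg hγn.le]
  refine norm_sum_Ico_le_inv_mul_of_monotoneOn (β := fun i => γ i ^ r) hnk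
    (fun i hi => Real.rpow_pos_of_pos (hγn.trans_le (hγ hi)) r)
    (fun i hi j _ hij => Real.rpow_le_rpow (hγn.le.trans (hγ hi)) (hγ hij) hr) fun j hj => ?_
  obtain ⟨hnj, hjk⟩ := Finset.mem_Icc.1 hj
  simp only [smul_smul, mul_comm (γ _ ^ r)]
  exact norm_sum_Ico_le_biSup_norm_sum_Icc _ hnj
    (le_sSup_of_sub_le hγtop hnj ((sub_le_sub_right (hγ hjk) _).trans ht))

variable {E : Type*} [NormedAddCommGroup E] [InnerProductSpace ℝ E] {f : E → ℝ}
  {α : ℕ → ℝ} {x ξ : ℕ → E}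

lemma eventually_bounds_of_lojasiewicz [CompleteSpace E] {s : Set E} (hs : Convex ℝ s)
    (hf : ∀ z ∈ s, DifferentiableAt ℝ f z) {K : ℝ≥0} (hK : LipschitzOnWith K (∇ f) s)
    (hrec : ∀ n, x (n + 1) = x n - α n • (∇ f (x n) + ξ n)) (hx : ∀ n, x n ∈ s)
    (hα₀ : ∀ n, 0 ≤ α n) (hα : Tendsto α atTop (nhds 0))
    (hαsum : Tendsto (fun n => ∑ i ∈ Finset.range n, α i) atTop atTop)
    {t : ℝ} (ht : 0 < t) (hKt : 32 * (K * t) ≤ 1) {v : ℕ → ℝ} (hv₀ : ∀ᶠ n in atTop, 0 < v n)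
    (hanti : ∀ᶠ n in atTop, ∀ k ≥ n, v k ≤ v n) (hv : Tendsto v atTop (nhds 0))
    (hnoise : ∀ᶠ n in atTop, ∀ k ≥ n, ∑ i ∈ Finset.Ico n k, α i ≤ t →
      ‖∑ i ∈ Finset.Ico n k, α i • ξ i‖ ≤ t / 8 * v n)
    {b M μ : ℝ} (hb : ∀ c < b, ∀ᶠ n in atTop, c < f (x n)) (hM : 0 ≤ M) (hμ : μ ∈ Set.Ioc 0 2)
    (hLoj : ∀ᶠ n in atTop, f (x n) < b → |f (x n) - b| ≤ M * ‖∇ f (x n)‖ ^ μ) :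
    ∀ᶠ n in atTop, -(M * v n ^ μ) ≤ f (x n) - b ∧
      t / 4 * ‖∇ f (x n)‖ ^ 2 ≤ max (f (x n) - b) 0 + (M + t / 4) * v n ^ μ := by
  have hstep : ∀ᶠ n in atTop, ∃ k > n,
      f (x k) - b - (f (x n) - b) ≤ -(t / 4 * (‖∇ f (x n)‖ ^ 2 - v n ^ 2)) := by
    filter_upwards [hnoise, eventually_forall_ge_atTop.2 (hα.eventually_le_const (half_pos ht))]
      with n hnoise hαn
    obtain ⟨k, hnk, hk⟩ := exists_gt_sum_Ico_mem_Icc hαsum (half_pos ht)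
      (b := t) fun i hi => (hαn i hi).trans (by linarith)
    refine ⟨k, hnk, ?_⟩
    rw [sub_sub_sub_cancel_right]
    refine sub_le_of_perturbed_gradient_descent hs hf hK hrec hx hα₀ hnk.le ht hKt hk
      fun j hj => hnoise j (Finset.mem_Icc.1 hj).1 (le_trans ?_ hk.2)
    exact Finset.sum_le_sum_of_subset_of_nonneg
      (Finset.Ico_subset_Ico_right (Finset.mem_Icc.1 hj).2) fun i _ _ => hα₀ i
  have hlow := eventually_neg_rpow_le_of_descent (u := fun n => f (x n) - b) (by positivity) hM hμ.1
    (fun n => norm_nonneg _) (hv₀.mono fun n => le_of_lt) hanti hstep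
    (hLoj.mono fun n h hn => h (sub_neg.1 hn))
    (fun c hc => (hb (b + c) (by linarith)).mono fun n hn => by linarith)
  exact hlow.and (eventually_sq_le_of_descent (by positivity) hM hμ hv₀ hanti
    (hv.eventually_le_const one_pos) hstep hlow)

lemma exists_eventually_bounds_of_noise_le [ProperSpace E] (hf : Differentiable ℝ f)
    (hlip : LocallyLipschitz (∇ f)) (hrec : ∀ n, x (n + 1) = x n - α n • (∇ f (x n) + ξ n))
    {R : ℝ} (hx : ∀ n, ‖x n‖ ≤ R)
    (hα₀ : ∀ n, 0 ≤ α n) (hα : Tendsto α atTop (nhds 0))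
    (hαsum : Tendsto (fun n => ∑ i ∈ Finset.range n, α i) atTop atTop)
    {b M μ : ℝ} (hb : ∀ c < b, ∀ᶠ n in atTop, c < f (x n)) (hM : 1 ≤ M) (hμ : μ ∈ Set.Ioc 0 2)
    (hLoj : ∀ᶠ n in atTop, f (x n) < b → |f (x n) - b| ≤ M * ‖∇ f (x n)‖ ^ μ) :
    ∃ C₂ C₅ : ℝ, 1 ≤ C₂ ∧ 1 ≤ C₅ ∧ ∀ w : ℕ → ℝ, (∀ᶠ n in atTop, 0 < w n) →
      (∀ᶠ n in atTop, ∀ k ≥ n, w k ≤ w n) → Tendsto w atTop (nhds 0) →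
      (∀ᶠ n in atTop, ∀ k ≥ n, ∑ i ∈ Finset.Ico n k, α i ≤ 1 →
        ‖∑ i ∈ Finset.Ico n k, α i • ξ i‖ ≤ w n) →
      ∀ᶠ n in atTop, -(C₂ * w n ^ μ) ≤ f (x n) - b ∧
        ‖∇ f (x n)‖ ^ 2 ≤ C₅ * (max (f (x n) - b) 0 + w n ^ μ) := by
  obtain ⟨K, hK⟩ := (hlip.locallyLipschitzOn (s := Metric.closedBall 0 R)
    ).exists_lipschitzOnWith_of_compact (isCompact_closedBall 0 R)
  obtain ⟨t, ht₀, ht₁, hKt⟩ : ∃ t : ℝ, 0 < t ∧ t ≤ 1 ∧ 32 * (K * t) ≤ 1 := by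
    refine ⟨(32 * (K + 1))⁻¹, by positivity, inv_le_one_of_one_le₀ ?_, ?_⟩
    · linarith [K.coe_nonneg]
    · rw [← mul_assoc, ← div_eq_mul_inv, div_le_one (by positivity)]
      linarith
  have hscale : 1 ≤ (8 / t) ^ μ :=
    Real.one_le_rpow ((one_le_div ht₀).2 (by linarith)) hμ.1.le
  set D := (M + t / 4) * (8 / t) ^ μ with hD
  have hD₀ : 0 ≤ D := by positivity
  have hinv : 1 ≤ 4 / t := (one_le_div ht₀).2 (by linarith)
  refine ⟨M * (8 / t) ^ μ, 4 / t * (1 + D), one_le_mul_of_one_le_of_one_le hM hscale,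
    one_le_mul_of_one_le_of_one_le hinv (by linarith), fun w hw₀ hanti hw hnoise => ?_⟩
  have hbounds := eventually_bounds_of_lojasiewicz (v := fun n => 8 / t * w n)
    (convex_closedBall 0 R) (fun z _ => hf z) hK hrec (fun n => by simpa using hx n) hα₀ hα hαsum
    ht₀ hKt (hw₀.mono fun n hn => by positivity)
    (hanti.mono fun n hn k hk => mul_le_mul_of_nonneg_left (hn k hk) (by positivity))
    (by simpa using hw.const_mul (8 / t))
    (hnoise.mono fun n hn k hnk hk => (hn k hnk (hk.trans ht₁)).trans_eq (by field_simp))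
    hb (by linarith) hμ hLoj
  filter_upwards [hbounds, hw₀] with n ⟨hlow, hgrad⟩ hwn
  rw [Real.mul_rpow (by positivity) hwn.le, ← mul_assoc] at hlow hgrad
  rw [← hD] at hgrad
  refine ⟨hlow, ?_⟩
  have hmax : 0 ≤ D * max (f (x n) - b) 0 := by positivity
  have hwμ : 0 ≤ w n ^ μ := by positivity
  calc ‖∇ f (x n)‖ ^ 2 = 4 / t * (t / 4 * ‖∇ f (x n)‖ ^ 2) := by field_simp
    _ ≤ 4 / t * ((1 + D) * (max (f (x n) - b) 0 + w n ^ μ)) :=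
        mul_le_mul_of_nonneg_left (by linarith) (by positivity)
    _ = 4 / t * (1 + D) * (max (f (x n) - b) 0 + w n ^ μ) := (mul_assoc ..).symm

lemma exists_eventually_bounds_of_noise_le_rpow [ProperSpace E] (hf : Differentiable ℝ f)
    (hlip : LocallyLipschitz (∇ f)) (hrec : ∀ n, x (n + 1) = x n - α n • (∇ f (x n) + ξ n))
    {R : ℝ} (hx : ∀ n, ‖x n‖ ≤ R) (hα₀ : ∀ n, 0 ≤ α n) (hα : Tendsto α atTop (nhds 0))
    {γ : ℕ → ℝ} (hγ : ∀ n, γ n = ∑ i ∈ Finset.range n, α i) (hγtop : Tendsto γ atTop atTop)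
    {b M μ : ℝ} (hb : ∀ c < b, ∀ᶠ n in atTop, c < f (x n)) (hM : 1 ≤ M) (hμ : μ ∈ Set.Ioc 0 2)
    (hLoj : ∀ᶠ n in atTop, f (x n) < b → |f (x n) - b| ≤ M * ‖∇ f (x n)‖ ^ μ) :
    ∃ C₂ C₅ : Set.Ici (1 : ℝ), ∀ ρ > 0, ∀ φ > 0,
      (∀ᶠ n in atTop, ∀ k ≥ n, γ k - γ n ≤ 1 →
        ‖∑ i ∈ Finset.Ico n k, α i • ξ i‖ ≤ γ n ^ (-ρ) * φ) →
      ∀ᶠ n in atTop, -(C₂ * γ n ^ (-(μ * ρ)) * φ ^ μ) ≤ f (x n) - b ∧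
        ‖∇ f (x n)‖ ^ 2 ≤ C₅ * (max (f (x n) - b) 0 + γ n ^ (-(μ * ρ)) * φ ^ μ) := by
  obtain ⟨C₂, C₅, hC₂, hC₅, hC⟩ := exists_eventually_bounds_of_noise_le hf hlip hrec hx hα₀ hα
    (hγtop.congr hγ) hb hM hμ hLoj
  refine ⟨⟨C₂, hC₂⟩, ⟨C₅, hC₅⟩, fun ρ hρ φ hφ hnoise => ?_⟩
  have hγpos := hγtop.eventually_gt_atTop 0
  have hγmono := monotone_of_eq_sum_range hα₀ hγ
  have hanti : ∀ᶠ n in atTop, ∀ k ≥ n, γ k ^ (-ρ) * φ ≤ γ n ^ (-ρ) * φ :=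
    hγpos.mono fun n hγn k hnk => mul_le_mul_of_nonneg_right
      (Real.rpow_le_rpow_of_nonpos hγn (hγmono hnk) (neg_nonpos.2 hρ.le)) hφ.le
  have hzero : Tendsto (fun n => γ n ^ (-ρ) * φ) atTop (nhds 0) := by
    simpa using ((tendsto_rpow_neg_atTop hρ).comp hγtop).mul_const φ
  filter_upwards [hγpos, hC _ (hγpos.mono fun n hγn => by positivity) hanti hzero
    (hnoise.mono fun n hn k hnk hk =>
      hn k hnk ((sub_eq_sum_Ico_of_eq_sum_range hγ hnk).trans_le hk))] with n hγn hbounds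
  rwa [Real.mul_rpow (by positivity) hφ.le, ← Real.rpow_mul hγn.le, neg_mul, mul_comm ρ,
    ← mul_assoc] at hbounds

end EventualBounds

theorem stochastic_gradient_lower_and_gradient_bounds_general
    {E : Type*} [NormedAddCommGroup E] [InnerProductSpace ℝ E] [ProperSpace E] {f : E → ℝ}
    (hf : Differentiable ℝ f) (hlip : LocallyLipschitz (gradient f))
    {α : ℕ → ℝ} (hα : ∀ n, 0 ≤ α n) {x ξ : ℕ → E}
    (hrec : ∀ n, x (n + 1) = x n - α n • (gradient f (x n) + ξ n))
    (hα0 : Tendsto α atTop (nhds 0)) {γ : ℕ → ℝ} (hγ : ∀ n, γ n = ∑ i ∈ Finset.range n, α i)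
    (hγtop : Tendsto γ atTop atTop) (hx : Bornology.IsBounded (Set.range x))
    {r : ℝ} (hr : 0 < r) {η : ℕ → ℝ}
    (hη : ∀ n, η n = ⨆ k ∈ Set.Ico n (sSup {k | n ≤ k ∧ γ k - γ n ≤ 1}),
      ‖∑ i ∈ Finset.Icc n k, (α i * γ i ^ r) • ξ i‖)
    (hηbdd : IsBoundedUnder (· ≤ ·) atTop η)
    {b : ℝ} (hb : b = liminf (fun n => f (x n)) atTop) {δ : E → ℝ} (hδ : ∀ z, 0 < δ z)
    {δ₀ μ M : ℝ} (hδ₀ : 0 < δ₀) (hμ : μ ∈ Set.Ioc 0 2) (hM : 1 ≤ M)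
    (hLoj : ∀ y ∈ clusterNeighborhood δ x, |f y - b| ≤ δ₀ →
      |f y - b| ≤ M * ‖gradient f y‖ ^ μ) :
    ∃ C₂ C₅ : Set.Ici (1 : ℝ), ∀ ε > 0, ∀ᶠ n in atTop,
      -(C₂ * γ n ^ (-(μ * minRate r μ)) * (noiseLevel r μ (limsup η atTop) + ε) ^ μ) ≤
        f (x n) - b ∧
      ‖gradient f (x n)‖ ^ 2 ≤ C₅ * (max (f (x n) - b) 0 +
        γ n ^ (-(μ * minRate r μ)) * (noiseLevel r μ (limsup η atTop) + ε) ^ μ) := by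
  obtain ⟨R, hR⟩ := hx.exists_norm_le
  obtain ⟨C₂, C₅, hC⟩ := exists_eventually_bounds_of_noise_le_rpow hf hlip hrec
    (fun n => hR _ ⟨n, rfl⟩) hα hα0 hγ hγtop
    (fun c hc => eventually_lt_of_lt_liminf_of_isBounded_range hf.continuous hx (hb ▸ hc)) hM hμ
    (eventually_of_lt_liminf_of_forall_mem_clusterNeighborhood hδ hx hf.continuous hδ₀ hb hLoj)
  have hη₀ : ∀ n, 0 ≤ η n := fun n =>
    hη n ▸ Real.iSup_nonneg fun k => Real.iSup_nonneg fun _ => norm_nonneg _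
  refine ⟨C₂, C₅, fun ε hε => hC _ (minRate_pos hr) _ (add_pos_of_nonneg_of_pos
    (noiseLevel_nonneg hμ.2 (le_limsup_of_frequently_le (.of_forall hη₀) hηbdd)) hε) ?_⟩
  filter_upwards [hγtop.eventually_gt_atTop 0,
    eventually_rpow_neg_mul_le_noiseLevel hγtop hμ.2 hηbdd hε] with n hγn hle k hnk hk
  calc ‖∑ i ∈ Finset.Ico n k, α i • ξ i‖ ≤ γ n ^ (-r) * η n := hη n ▸
        norm_sum_Ico_le_rpow_neg_mul_biSup (monotone_of_eq_sum_range hα hγ) hγtop hr.le ξ hγn hnk hk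
    _ ≤ _ := hle

/-- Lemma 1.5 of the paper: under Assumptions 1.1, 1.2, 1.3
there are random variables `Ĉ₂, Ĉ₅ ∈ [1,∞)` such that, almost surely on `Λ`,
for every `ε > 0` and all but finitely many `n`:
`u(θ_n) ≥ −Ĉ₂ γ_n^{−p̂} (φ_ε(ξ))^μ̂` and
`‖∇f(θ_n)‖² ≤ Ĉ₅ (max{u(θ_n),0} + γ_n^{−p̂} (φ_ε(ξ))^μ̂)`. -/
theorem stochastic_gradient_lower_and_gradient_bounds
    {d : ℕ} (hd : 1 ≤ d)
    {Ω : Type} [MeasurableSpace Ω] (P : Measure Ω) [IsProbabilityMeasure P]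
    (f : EuclideanSpace ℝ (Fin d) → ℝ)
    (hfd : Differentiable ℝ f)
    (hlip : LocallyLipschitz (fun x => gradient f x))
    (α : ℕ → ℝ) (hαpos : ∀ n, 0 < α n)
    (θ ξ : ℕ → Ω → EuclideanSpace ℝ (Fin d))
    (hrec : ∀ n ω, θ (n + 1) ω = θ n ω - α n • (gradient f (θ n ω) + ξ n ω))
    -- Assumption 1.1
    (hα0 : Tendsto α atTop (nhds 0))
    (γ : ℕ → ℝ) (hγ : ∀ n, γ n = ∑ i ∈ Finset.range n, α i)
    (hαdiv : Tendsto γ atTop atTop)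
    -- the interpolation index `a(n,t)`
    (a : ℕ → ℝ → ℕ)
    (ha : ∀ n t, 0 < t → a n t = sSup {k | n ≤ k ∧ γ k - γ n ≤ t})
    -- the event Λ
    (Λ : Set Ω) (hΛ : Λ = {ω | ∃ C, ∀ n, ‖θ n ω‖ ≤ C})
    -- Assumption 1.2
    (r : ℝ) (hr : 1 < r)
    (noise : ℕ → Ω → ℝ)
    (hnoise : ∀ n ω, noise n ω =
      ⨆ k ∈ Set.Ico n (a n 1), ‖∑ i ∈ Finset.Icc n k, (α i * γ i ^ r) • ξ i ω‖)
    (hA12 : ∀ᵐ ω ∂P, ω ∈ Λ → IsBoundedUnder (· ≤ ·) atTop (fun n => noise n ω))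
    (Xi : Ω → ℝ) (hXi : ∀ ω, Xi ω = Filter.limsup (fun n => noise n ω) atTop)
    -- Assumption 1.3 (Łojasiewicz-type gradient inequality, with a choice
    -- `δ_{Q,a}, μ_{Q,a}, M_{Q,a}` of the Łojasiewicz data for each compact `Q`
    -- and each value `a ∈ f(Q)`)
    (δQ μQ MQ : Set (EuclideanSpace ℝ (Fin d)) → ℝ → ℝ)
    (hLoj : ∀ Q : Set (EuclideanSpace ℝ (Fin d)), IsCompact Q → ∀ b ∈ f '' Q,
      δQ Q b ∈ Set.Ioc (0 : ℝ) 1 ∧ μQ Q b ∈ Set.Ioc (1 : ℝ) 2 ∧ 1 ≤ MQ Q b ∧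
      ∀ x ∈ Q, |f x - b| ≤ δQ Q b → |f x - b| ≤ MQ Q b * ‖gradient f x‖ ^ μQ Q b)
    -- the local Łojasiewicz data `δ_θ, μ_θ, M_θ` provided by Assumption 1.3
    (δl μl Ml : EuclideanSpace ℝ (Fin d) → ℝ)
    (hδl : ∀ x, δl x ∈ Set.Ioc (0 : ℝ) 1)
    (hμl : ∀ x, μl x ∈ Set.Ioc (1 : ℝ) 2)
    (hMl : ∀ x, 1 ≤ Ml x)
    (hLocal : ∀ x y, ‖y - x‖ ≤ δl x → |f y - f x| ≤ Ml x * ‖gradient f y‖ ^ μl x)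
    -- `f̂ = liminf_n f(θ_n)`
    (fhat : Ω → ℝ)
    (hfhat : ∀ ω, fhat ω = Filter.liminf (fun n => f (θ n ω)) atTop)
    -- `Â` = set of accumulation points of `{θ_n}`, and
    -- `Q̂ = cl(⋃_{θ ∈ Â} {θ' : ‖θ' − θ‖ ≤ δ_θ/2})`
    (Ahat : Ω → Set (EuclideanSpace ℝ (Fin d)))
    (hAhat : ∀ ω, Ahat ω = {x | MapClusterPt x atTop (fun n => θ n ω)})
    (Qhat : Ω → Set (EuclideanSpace ℝ (Fin d)))
    (hQhat : ∀ ω, Qhat ω = closure (⋃ x ∈ Ahat ω, Metric.closedBall x (δl x / 2)))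
    -- `μ̂ = μ_{Q̂,f̂}`, `r̂ = 1/(2−μ̂)` (`= ∞` if `μ̂ = 2`), `p̂ = μ̂ min{r,r̂}`
    (μhat : Ω → ℝ) (hμhat : ∀ ω, μhat ω = μQ (Qhat ω) (fhat ω))
    (phat : Ω → ℝ)
    (hphat : ∀ ω, phat ω =
      μhat ω * (if μhat ω < 2 then min r (1 / (2 - μhat ω)) else r))
    -- `φ_ε(ξ) = φ(ξ) + ε` where `φ(ξ) = ξ` if `r < r̂`, `1 + ξ` if `r = r̂`,
    -- and `1` if `r > r̂`
    (φe : Ω → ℝ → ℝ)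
    (hφe : ∀ ω ε, φe ω ε =
      (if μhat ω = 2 ∨ r < 1 / (2 - μhat ω) then Xi ω
        else if r = 1 / (2 - μhat ω) then 1 + Xi ω else 1) + ε) :
    ∃ C₂ C₅ : Ω → ℝ, (∀ ω, 1 ≤ C₂ ω) ∧ (∀ ω, 1 ≤ C₅ ω) ∧
      ∀ᵐ ω ∂P, ω ∈ Λ → ∀ ε : ℝ, 0 < ε →
        ∀ᶠ n in atTop,
          (f (θ n ω) - fhat ω ≥ -(C₂ ω * γ n ^ (-(phat ω)) * φe ω ε ^ μhat ω)) ∧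
          (‖gradient f (θ n ω)‖ ^ 2 ≤
            C₅ ω * (max (f (θ n ω) - fhat ω) 0 +
              γ n ^ (-(phat ω)) * φe ω ε ^ μhat ω)) := by
  subst hΛ
  obtain rfl : Ahat = _ := funext hAhat
  obtain rfl : fhat = _ := funext hfhat
  choose! C₂ C₅ hC using fun ω (hω : ∃ C, ∀ n, ‖θ n ω‖ ≤ C)
      (hη : IsBoundedUnder (· ≤ ·) atTop fun n => noise n ω) => by
    have hθ : Bornology.IsBounded (Set.range fun n => θ n ω) :=
      isBounded_iff_forall_norm_le.2 (by simpa using hω)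
    have hδ : ∀ z, 0 < δl z := fun z => (hδl z).1
    obtain ⟨hδ₀, hμ, hM, hLojQ⟩ := hLoj _
      (isCompact_clusterNeighborhood (fun z => (hδl z).2) hθ) _
      (liminf_mem_image_clusterNeighborhood hδ hθ hfd.continuous)
    exact stochastic_gradient_lower_and_gradient_bounds_general hfd hlip (fun n => (hαpos n).le)
      (hrec · ω) hα0 hγ hαdiv hθ (one_pos.trans hr)
      (fun n => (hnoise n ω).trans (by rw [ha n 1 one_pos])) hη rfl hδ hδ₀.1
      ⟨one_pos.trans hμ.1, hμ.2⟩ hM hLojQ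
  refine ⟨fun ω => C₂ ω, fun ω => C₅ ω, fun ω => (C₂ ω).2, fun ω => (C₅ ω).2, ?_⟩
  filter_upwards [hA12] with ω hη hω ε hε
  simp only [hphat, hφe, hμhat, hQhat, hXi]
  exact hC ω hω (hη hω) ε hε
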